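/- Let n and k be positive integers and let λ = (λ₁, λ₂, …, λ_m) be a partition of n with n ≥ k + λ₂. Then there is a bijection between the set KT^k_{(n),λ} of Kronecker tableaux of length k, initial shape (n) and final shape λ, and the set of sequences ν⁰, ν¹, …, ν^k of partitions such that ν⁰ = ∅, ν^k = λ̄, and for every 0 ≤ i < k one of the following holds: ν^{i+1} is obtained from ν^i by adding one corner; ν^{i+1} is obtained from ν^i by removing one corner; ν^{i+1} differs from ν^i by the position of a corner; or ν^{i+1} = ν^i together with the datum of one distinguished corner of ν^{i+1}. In particular these two finite sets have the same cardinality. -/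

import Mathlib

open Finset

namespace KroneckerPaper

/-- A (removable) corner of a Young diagram: a cell with no cell below it nor to its right
(in English notation; equivalently, in French notation, a cell at the right end of its row
with no cell above it). -/
def IsCorner (μ : YoungDiagram) (c : ℕ × ℕ) : Prop :=
  c ∈ μ ∧ (c.1 + 1, c.2) ∉ μ ∧ (c.1, c.2 + 1) ∉ μ

/-- The *first corner* of a Young diagram: the unique corner lying on a row of maximal
length. -/
def IsFirstCorner (μ : YoungDiagram) (c : ℕ × ℕ) : Prop :=
  IsCorner μ c ∧ μ.rowLen c.1 = μ.rowLen 0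

/-- `μ'` is obtained from `μ` by adding one new cell which is a corner of `μ'`. -/
def AddCorner (μ μ' : YoungDiagram) : Prop :=
  ∃ c, IsCorner μ' c ∧ c ∉ μ.cells ∧ μ'.cells = insert c μ.cells

/-- `μ'` is obtained from `μ` by removing one corner of `μ`. -/
def RemoveCorner (μ μ' : YoungDiagram) : Prop :=
  ∃ c, IsCorner μ c ∧ μ'.cells = μ.cells.erase c

/-- `μ' ≠ μ` *differs from `μ` by the position of a corner*: it is obtained from `μ` by
removing a corner of `μ` and adding a new cell which is a corner of `μ'`. -/
def MoveCorner (μ μ' : YoungDiagram) : Prop :=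
  μ' ≠ μ ∧ ∃ c c', IsCorner μ c ∧ IsCorner μ' c' ∧ c' ∉ μ.cells.erase c ∧
    μ'.cells = insert c' (μ.cells.erase c)

/-- The one-row Young diagram `(n)`. -/
def rowDiagram (n : ℕ) : YoungDiagram :=
  YoungDiagram.ofRowLens [n] (List.sortedGE_iff_pairwise.2 (List.pairwise_singleton _ n))

/-- The Young diagram obtained by deleting the first (longest) row, i.e. the truncated
partition `λ̄ = (λ₂, …, λ_m)` of `λ = (λ₁, λ₂, …, λ_m)`. -/
def truncate (μ : YoungDiagram) : YoungDiagram where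
  cells := (μ.cells.filter fun c => 1 ≤ c.1).image fun c => (c.1 - 1, c.2)
  isLowerSet := by
    rintro ⟨i1, j1⟩ ⟨i2, j2⟩ ⟨hi, hj⟩ h
    simp only [Finset.coe_image, Finset.coe_filter, Set.mem_image, Set.mem_setOf_eq,
      Finset.mem_coe, YoungDiagram.mem_cells] at h ⊢
    obtain ⟨⟨a, b⟩, ⟨ha, ha1⟩, heq⟩ := h
    simp only [Prod.mk.injEq] at heq
    exact ⟨(i2 + 1, j2), ⟨μ.up_left_mem (by omega) (by omega) ha, by omega⟩, by simp⟩

/-- A *Kronecker tableau* of length `k`, initial shape `μ` and final shape `lam`: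
a sequence `μ⁰ = μ, μ¹, …, μ^k = lam` of diagrams such that each `μ^{i+1}` either differs
from `μ^i` by the position of a corner, or equals `μ^i` together with the datum of a
distinguished corner of `μ^{i+1}` other than its first corner. -/
structure KroneckerTableau (k : ℕ) (μ lam : YoungDiagram) where
  seq : Fin (k + 1) → YoungDiagram
  dist : Fin k → Option (ℕ × ℕ)
  init : seq 0 = μ
  final : seq (Fin.last k) = lam
  step : ∀ i : Fin k,
    (MoveCorner (seq i.castSucc) (seq i.succ) ∧ dist i = none) ∨
    (seq i.succ = seq i.castSucc ∧
      ∃ c, dist i = some c ∧ IsCorner (seq i.succ) c ∧ ¬ IsFirstCorner (seq i.succ) c)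

/-- A *partial standard tableau* of shape `α` with labels in `{1, …, k}`: a labelling of the
cells of `α` by pairwise distinct integers of `{1, …, k}` increasing along rows and columns
(cells outside `α` are labelled `0` by convention). -/
structure PartialST (α : YoungDiagram) (k : ℕ) where
  label : ℕ × ℕ → ℕ
  mem_of_cell : ∀ c ∈ α, label c ∈ Finset.Icc 1 k
  zero_of_not_cell : ∀ c, c ∉ α → label c = 0
  injOn : ∀ c ∈ α, ∀ c' ∈ α, label c = label c' → c = c'
  row_incr : ∀ i j1 j2 : ℕ, j1 < j2 → (i, j2) ∈ α → label (i, j1) < label (i, j2)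
  col_incr : ∀ i1 i2 j : ℕ, i1 < i2 → (i2, j) ∈ α → label (i1, j) < label (i2, j)

/-- `f^α`, the number of standard Young tableaux of shape `α`. -/
noncomputable def fSYT (α : YoungDiagram) : ℕ :=
  Nat.card (PartialST α α.card)

/-- `p₂ n k`: the number of partitions of an `n`-element set into exactly `k` blocks, each of
size at least `2` (associated Stirling numbers of the second kind). -/
noncomputable def p2 (n k : ℕ) : ℕ :=
  Nat.card {P : Finpartition (Finset.univ : Finset (Fin n)) //
    P.parts.card = k ∧ ∀ b ∈ P.parts, 2 ≤ b.card}

/-- Every non-trivial cycle of `π` is *decreasing*: `π x < x` for every element `x` of a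
non-trivial cycle which is not the minimum of its cycle. -/
def DecCycles {S : Type*} [LinearOrder S] (π : Equiv.Perm S) : Prop :=
  ∀ x, π x ≠ x → (∃ y, π.SameCycle x y ∧ y < x) → π x < x

/-- A pair `(T, π)` of a partial standard tableau of shape `α` with labels in `{1, …, k}`
and a permutation `π` of `{1, …, k}` all of whose non-trivial cycles are decreasing, such
that every fixed point of `π` is a label of `T` and every label of `T` is the greatest
element of its cycle in `π`. -/
structure TabPerm (k : ℕ) (α : YoungDiagram) where
  T : PartialST α k
  π : Equiv.Perm ℕ
  perm_of : ∀ x : ℕ, x ∉ Finset.Icc 1 k → π x = x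
  dec : DecCycles π
  fix_mem : ∀ x ∈ Finset.Icc 1 k, π x = x → ∃ c ∈ α, T.label c = x
  label_max : ∀ c ∈ α, ∀ y : ℕ, π.SameCycle (T.label c) y → y ≤ T.label c


/-- A sequence `ν⁰ = ∅, ν¹, …, ν^k = α` of diagrams in which each `ν^{i+1}` is obtained
from `ν^i` by adding a corner, removing a corner, or moving a corner, or `ν^{i+1} = ν^i`
together with the datum of one distinguished corner of `ν^{i+1}`. -/
structure CorrSeq (k : ℕ) (α : YoungDiagram) where
  seq : Fin (k + 1) → YoungDiagram
  dist : Fin k → Option (ℕ × ℕ)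
  init : seq 0 = ⊥
  final : seq (Fin.last k) = α
  step : ∀ i : Fin k,
    ((AddCorner (seq i.castSucc) (seq i.succ) ∨ RemoveCorner (seq i.castSucc) (seq i.succ) ∨
        MoveCorner (seq i.castSucc) (seq i.succ)) ∧ dist i = none) ∨
    (seq i.succ = seq i.castSucc ∧ ∃ c, dist i = some c ∧ IsCorner (seq i.succ) c)

/-!
Two diagrams differ by adding, removing or moving a corner exactly when they are distinct and each
has at most one cell outside the other. For two diagrams of the same size with first rows deleted
to `ν` and `ν'`, the first rows absorb the difference in size, so the number of cells of either one
outside the other is the maximum of `#(ν \ ν')` and `#(ν' \ ν)`. Hence moving a corner amounts to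
adding, removing or moving one in the truncated diagram.

Conversely `ν` is recovered as the truncation of `(n - |ν|, ν₁, ν₂, …)`, which is a diagram once
`|ν| + ν₁ ≤ n`. In a sequence of `k` steps from `∅` to `α`, counting steps from the left gives
`|νⁱ| ≤ i` and counting from the right gives `νⁱ₁ ≤ α₁ + (k - i)`, so `k + α₁ ≤ n` suffices. When
step `i` is stationary one step is saved, which makes the first row strictly longer than the second,
so that no corner below the first row is the first corner.
-/

attribute [ext] KroneckerTableau CorrSeq

section CellDifferences

variable {μ μ' : YoungDiagram} {c : ℕ × ℕ}

theorem card_add_card_sdiff_cells (μ μ' : YoungDiagram) :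
    μ.card + #(μ'.cells \ μ.cells) = μ'.card + #(μ.cells \ μ'.cells) := by
  rw [add_comm, card_sdiff_add_card, add_comm, card_sdiff_add_card, union_comm]

theorem isCorner_of_sdiff_cells_eq_singleton (h : μ.cells \ μ'.cells = {c}) : IsCorner μ c := by
  have mem_iff (d : ℕ × ℕ) : d ∈ μ ∧ d ∉ μ' ↔ d = c := by
    simpa using Finset.ext_iff.1 h d
  obtain ⟨hc, hc'⟩ := (mem_iff c).2 rfl
  have notMem_of_gt (d : ℕ × ℕ) (hd : c < d) : d ∉ μ := fun hdμ =>
    hd.ne' ((mem_iff d).1 ⟨hdμ, fun hdμ' => hc' (μ'.isLowerSet hd.le hdμ')⟩)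
  exact ⟨hc, notMem_of_gt _ (Prod.mk_lt_mk_of_lt_of_le c.1.lt_succ_self le_rfl),
    notMem_of_gt _ (Prod.mk_lt_mk_of_le_of_lt le_rfl c.2.lt_succ_self)⟩

theorem addCorner_iff_card_sdiff :
    AddCorner μ μ' ↔ #(μ.cells \ μ'.cells) = 0 ∧ #(μ'.cells \ μ.cells) = 1 := by
  rw [card_eq_zero, card_eq_one]
  constructor
  · rintro ⟨c, -, hc, h⟩
    rw [h, insert_sdiff_of_notMem _ hc, sdiff_self]
    exact ⟨sdiff_eq_empty_iff_subset.2 (subset_insert _ _), c, rfl⟩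
  · rintro ⟨hsub, c, hc⟩
    have hmem : c ∈ μ'.cells \ μ.cells := hc ▸ mem_singleton_self c
    refine ⟨c, isCorner_of_sdiff_cells_eq_singleton hc, (mem_sdiff.1 hmem).2, ?_⟩
    rw [insert_eq, ← hc, sdiff_union_of_subset (sdiff_eq_empty_iff_subset.1 hsub)]

theorem removeCorner_iff_addCorner : RemoveCorner μ μ' ↔ AddCorner μ' μ := by
  refine exists_congr fun c => and_congr_right fun hc => ?_
  constructor
  · intro h
    exact ⟨h ▸ notMem_erase c _, by rw [h, insert_erase hc.1]⟩
  · rintro ⟨hc', h⟩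
    rw [h, erase_insert hc']

theorem moveCorner_iff_card_sdiff :
    MoveCorner μ μ' ↔ #(μ.cells \ μ'.cells) = 1 ∧ #(μ'.cells \ μ.cells) = 1 := by
  simp only [card_eq_one]
  constructor
  · rintro ⟨hne, c, c', ⟨hc, -⟩, -, hc', h⟩
    rw [← YoungDiagram.mem_cells] at hc
    have hcc' : c ≠ c' := by
      rintro rfl
      exact hne (YoungDiagram.ext (h.trans (insert_erase hc)))
    have hsdiff : μ.cells \ μ'.cells = {c} := by grind
    have hsdiff' : μ'.cells \ μ.cells = {c'} := by grind
    exact ⟨⟨c, hsdiff⟩, c', hsdiff'⟩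
  · rintro ⟨⟨c, hc⟩, c', hc'⟩
    have hmem : c' ∈ μ'.cells \ μ.cells := hc' ▸ mem_singleton_self c'
    have hne : μ' ≠ μ := by
      rintro rfl
      simp at hmem
    refine ⟨hne, c, c', isCorner_of_sdiff_cells_eq_singleton hc,
      isCorner_of_sdiff_cells_eq_singleton hc',
      fun h => (mem_sdiff.1 hmem).2 (mem_of_mem_erase h), ?_⟩
    calc μ'.cells = μ'.cells \ μ.cells ∪ μ.cells \ (μ.cells \ μ'.cells) := by
          rw [sdiff_sdiff_right_self, inf_eq_inter, inter_comm, sdiff_union_inter]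
      _ = insert c' (μ.cells.erase c) := by rw [hc, hc', sdiff_singleton_eq_erase, insert_eq]

theorem MoveCorner.card_eq (h : MoveCorner μ μ') : μ'.card = μ.card := by
  have := card_add_card_sdiff_cells μ μ'
  rw [moveCorner_iff_card_sdiff] at h
  omega

end CellDifferences

section Truncation

variable {μ μ' : YoungDiagram} {i j : ℕ}

@[simp]
theorem mem_truncate : (i, j) ∈ truncate μ ↔ (i + 1, j) ∈ μ := by
  rw [← YoungDiagram.mem_cells]
  simp only [truncate, mem_image, mem_filter, YoungDiagram.mem_cells, Prod.mk.injEq]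
  constructor
  · rintro ⟨⟨a, b⟩, ⟨h, ha⟩, rfl, rfl⟩
    rwa [Nat.sub_add_cancel ha]
  · exact fun h => ⟨(i + 1, j), ⟨h, by simp⟩, by simp⟩

theorem isCorner_truncate : IsCorner (truncate μ) (i, j) ↔ IsCorner μ (i + 1, j) := by
  simp only [IsCorner, mem_truncate]

theorem rowLen_truncate (μ : YoungDiagram) (i : ℕ) :
    (truncate μ).rowLen i = μ.rowLen (i + 1) :=
  eq_of_forall_lt_iff fun j => by simp only [← YoungDiagram.mem_iff_lt_rowLen, mem_truncate]

theorem card_bot : (⊥ : YoungDiagram).card = 0 :=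
  card_empty

theorem rowLen_bot (i : ℕ) : (⊥ : YoungDiagram).rowLen i = 0 :=
  eq_of_forall_lt_iff fun j => by simp [← YoungDiagram.mem_iff_lt_rowLen]

theorem eq_of_rowLen_zero_eq_of_truncate_eq (hrow : μ.rowLen 0 = μ'.rowLen 0)
    (htrunc : truncate μ = truncate μ') : μ = μ' := by
  ext ⟨i, j⟩
  rw [YoungDiagram.mem_cells, YoungDiagram.mem_cells]
  cases i with
  | zero => rw [YoungDiagram.mem_iff_lt_rowLen, YoungDiagram.mem_iff_lt_rowLen, hrow]
  | succ i => rw [← mem_truncate, ← mem_truncate, htrunc]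

theorem sdiff_cells_eq_union (μ μ' : YoungDiagram) :
    μ.cells \ μ'.cells = {0} ×ˢ Ico (μ'.rowLen 0) (μ.rowLen 0) ∪
      ((truncate μ).cells \ (truncate μ').cells).image (Prod.map Nat.succ id) := by
  ext ⟨i, j⟩
  cases i <;> simp [YoungDiagram.mem_iff_lt_rowLen, rowLen_truncate, and_comm]

theorem card_sdiff_cells (μ μ' : YoungDiagram) :
    #(μ.cells \ μ'.cells) = (μ.rowLen 0 - μ'.rowLen 0) +
      #((truncate μ).cells \ (truncate μ').cells) := by
  have hdisj : Disjoint ({0} ×ˢ Ico (μ'.rowLen 0) (μ.rowLen 0))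
      (((truncate μ).cells \ (truncate μ').cells).image (Prod.map Nat.succ id)) := by
    rw [Finset.disjoint_left]
    rintro ⟨_ | i, j⟩ <;> simp
  rw [sdiff_cells_eq_union, card_union_of_disjoint hdisj, card_product, card_singleton, one_mul,
    Nat.card_Ico, card_image_of_injective _ (Nat.succ_injective.prodMap Function.injective_id)]

theorem rowLen_zero_add_card_truncate (μ : YoungDiagram) :
    μ.rowLen 0 + (truncate μ).card = μ.card := by
  have hbot : truncate ⊥ = ⊥ := by ext ⟨i, j⟩; simp
  simpa [hbot, rowLen_bot] using (card_sdiff_cells μ ⊥).symm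

theorem moveCorner_iff_truncate (hcard : μ.card = μ'.card) :
    MoveCorner μ μ' ↔ AddCorner (truncate μ) (truncate μ') ∨
      RemoveCorner (truncate μ) (truncate μ') ∨ MoveCorner (truncate μ) (truncate μ') := by
  have hsplit := rowLen_zero_add_card_truncate μ
  have hsplit' := rowLen_zero_add_card_truncate μ'
  have hsdiff := card_add_card_sdiff_cells (truncate μ) (truncate μ')
  simp only [removeCorner_iff_addCorner, addCorner_iff_card_sdiff, moveCorner_iff_card_sdiff,
    card_sdiff_cells μ, card_sdiff_cells μ']
  omega

theorem not_isFirstCorner_succ (h : μ.rowLen 1 < μ.rowLen 0) :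
    ¬ IsFirstCorner μ (i + 1, j) := fun hfirst =>
  ((μ.rowLen_anti 1 (i + 1) (by omega)).trans_lt h).ne hfirst.2

end Truncation

section Padding

/-- The padded diagram `(n - |ν|, ν₁, ν₂, …)` of size `n`. To have a diagram for every `n`, the
first row is given length `ν₁` when `n - |ν| < ν₁`. -/
def pad (n : ℕ) (ν : YoungDiagram) : YoungDiagram :=
  YoungDiagram.ofRowLens (max (n - ν.card) (ν.rowLen 0) :: ν.rowLens) <| by
    refine List.sortedGE_iff_pairwise.2 (List.pairwise_cons.2 ⟨?_, ν.rowLens_sorted.pairwise⟩)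
    simp only [YoungDiagram.rowLens, List.mem_map]
    rintro _ ⟨i, -, rfl⟩
    exact le_max_of_le_right (ν.rowLen_anti 0 i i.zero_le)

variable {n : ℕ} {μ ν : YoungDiagram}

theorem truncate_pad (n : ℕ) (ν : YoungDiagram) : truncate (pad n ν) = ν := by
  conv_rhs => rw [← YoungDiagram.ofRowLens_to_rowLens_eq_self (μ := ν)]
  ext ⟨i, j⟩
  simp [pad, YoungDiagram.mem_ofRowLens]

theorem rowLen_zero_pad (n : ℕ) (ν : YoungDiagram) :
    (pad n ν).rowLen 0 = max (n - ν.card) (ν.rowLen 0) :=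
  eq_of_forall_lt_iff fun j => by
    simp [← YoungDiagram.mem_iff_lt_rowLen, pad, YoungDiagram.mem_ofRowLens]

theorem card_pad (h : ν.card + ν.rowLen 0 ≤ n) : (pad n ν).card = n := by
  rw [← rowLen_zero_add_card_truncate, truncate_pad, rowLen_zero_pad]
  omega

theorem pad_truncate (h : μ.card = n) : pad n (truncate μ) = μ := by
  refine eq_of_rowLen_zero_eq_of_truncate_eq ?_ (truncate_pad _ _)
  have hsplit := rowLen_zero_add_card_truncate μ
  have hanti := μ.rowLen_anti 0 1 zero_le_one
  rw [rowLen_zero_pad, rowLen_truncate, zero_add]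
  omega

theorem pad_bot (n : ℕ) : pad n ⊥ = rowDiagram n := by
  have hcol : (⊥ : YoungDiagram).colLen 0 = 0 :=
    eq_of_forall_lt_iff fun i => by simp [← YoungDiagram.mem_iff_lt_colLen]
  simp [pad, rowDiagram, YoungDiagram.rowLens, hcol, rowLen_bot, card_bot]

theorem truncate_rowDiagram (n : ℕ) : truncate (rowDiagram n) = ⊥ := by
  rw [← pad_bot, truncate_pad]

theorem card_rowDiagram (n : ℕ) : (rowDiagram n).card = n := by
  rw [← pad_bot, card_pad (by simp [rowLen_bot, card_bot])]

end Padding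

namespace CorrSeq

variable {k : ℕ} {α : YoungDiagram}

theorem card_sdiff_le_one (S : CorrSeq k α) (i : Fin k) :
    #((S.seq i.castSucc).cells \ (S.seq i.succ).cells) ≤ 1 ∧
      #((S.seq i.succ).cells \ (S.seq i.castSucc).cells) ≤ 1 := by
  rcases S.step i with ⟨h, -⟩ | ⟨h, -⟩
  · simp only [removeCorner_iff_addCorner, addCorner_iff_card_sdiff,
      moveCorner_iff_card_sdiff] at h
    omega
  · simp [h]

theorem card_seq_le (S : CorrSeq k α) (i : Fin (k + 1)) : (S.seq i).card ≤ i := by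
  induction i using Fin.induction with
  | zero => simp [S.init]
  | succ i ih =>
    have hstep := (S.card_sdiff_le_one i).2
    have hcard := card_add_card_sdiff_cells (S.seq i.castSucc) (S.seq i.succ)
    rw [Fin.val_castSucc] at ih
    rw [Fin.val_succ]
    omega

theorem rowLen_zero_seq_add_le (S : CorrSeq k α) (i : Fin (k + 1)) :
    (S.seq i).rowLen 0 + i ≤ k + α.rowLen 0 := by
  induction i using Fin.reverseInduction with
  | last => simp [S.final, add_comm]
  | cast i ih =>
    have hstep := (S.card_sdiff_le_one i).1
    rw [card_sdiff_cells] at hstep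
    rw [Fin.val_succ] at ih
    rw [Fin.val_castSucc]
    omega

theorem card_pad_seq {n : ℕ} (S : CorrSeq k α) (hstable : k + α.rowLen 0 ≤ n) (i : Fin (k + 1)) :
    (pad n (S.seq i)).card = n := by
  have hcard := S.card_seq_le i
  have hrow := S.rowLen_zero_seq_add_le i
  exact card_pad (by omega)

theorem card_add_rowLen_zero_lt_of_stationary (S : CorrSeq k α) {i : Fin k}
    (h : S.seq i.succ = S.seq i.castSucc) :
    (S.seq i.succ).card + (S.seq i.succ).rowLen 0 < k + α.rowLen 0 := by
  have hcard := S.card_seq_le i.castSucc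
  have hrow := S.rowLen_zero_seq_add_le i.succ
  rw [← h, Fin.val_castSucc] at hcard
  rw [Fin.val_succ] at hrow
  omega

/-- The Kronecker tableau whose diagrams are the padded diagrams of a sequence: each distinguished
corner moves one row down, as a new first row is put above it. -/
def toKroneckerTableau {n : ℕ} {lam : YoungDiagram} (hcard : lam.card = n)
    (hstable : k + lam.rowLen 1 ≤ n) (S : CorrSeq k (truncate lam)) :
    KroneckerTableau k (rowDiagram n) lam where
  seq i := pad n (S.seq i)
  dist i := (S.dist i).map (Prod.map Nat.succ id)
  init := by rw [S.init, pad_bot]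
  final := by rw [S.final, pad_truncate hcard]
  step i := by
    rw [← zero_add 1, ← rowLen_truncate] at hstable
    rcases S.step i with ⟨hstep, hdist⟩ | ⟨hstat, ⟨a, b⟩, hdist, hc⟩
    · refine .inl ⟨?_, by rw [hdist, Option.map_none]⟩
      rwa [moveCorner_iff_truncate (by simp only [S.card_pad_seq hstable]), truncate_pad,
        truncate_pad]
    · refine .inr ⟨by rw [hstat], (a + 1, b), by rw [hdist]; rfl, ?_,
        not_isFirstCorner_succ ?_⟩
      · rwa [← isCorner_truncate, truncate_pad]
      · have hlt := S.card_add_rowLen_zero_lt_of_stationary hstat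
        rw [← zero_add 1, ← rowLen_truncate, truncate_pad, rowLen_zero_pad]
        omega

end CorrSeq

namespace KroneckerTableau

variable {k : ℕ} {μ lam : YoungDiagram}

theorem card_seq (K : KroneckerTableau k μ lam) (i : Fin (k + 1)) : (K.seq i).card = μ.card := by
  induction i using Fin.induction with
  | zero => rw [K.init]
  | succ i ih =>
    rcases K.step i with ⟨h, -⟩ | ⟨h, -⟩
    · rw [h.card_eq, ih]
    · rw [h, ih]

theorem exists_eq_succ_of_dist_eq_some (K : KroneckerTableau k μ lam) {i : Fin k} {c : ℕ × ℕ}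
    (h : K.dist i = some c) : ∃ a b, c = (a + 1, b) := by
  rcases K.step i with ⟨-, hnone⟩ | ⟨-, d, hd, hcorner, hfirst⟩
  · simp [h] at hnone
  · obtain rfl : c = d := Option.some_injective _ (h.symm.trans hd)
    obtain ⟨_ | a, b⟩ := c
    · exact absurd ⟨hcorner, rfl⟩ hfirst
    · exact ⟨a, b, rfl⟩

/-- The sequence of truncated diagrams of a Kronecker tableau: each distinguished corner moves one
row up. No distinguished corner lies in row `0`, so the truncation in `Nat.pred` is harmless. -/
def toCorrSeq {n : ℕ} (K : KroneckerTableau k (rowDiagram n) lam) : CorrSeq k (truncate lam) where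
  seq i := truncate (K.seq i)
  dist i := (K.dist i).map (Prod.map Nat.pred id)
  init := by rw [K.init, truncate_rowDiagram]
  final := by rw [K.final]
  step i := by
    rcases K.step i with ⟨hmove, hdist⟩ | ⟨hstat, c, hdist, hc, -⟩
    · exact .inl ⟨(moveCorner_iff_truncate hmove.card_eq.symm).1 hmove,
        by rw [hdist, Option.map_none]⟩
    · obtain ⟨a, b, rfl⟩ := K.exists_eq_succ_of_dist_eq_some hdist
      exact .inr ⟨by rw [hstat], (a, b), by rw [hdist]; rfl, isCorner_truncate.2 hc⟩

/-- Deleting first rows is a bijection from Kronecker tableaux to sequences of smaller diagrams,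
with padding as its inverse. -/
def equivCorrSeq {n : ℕ} (hcard : lam.card = n) (hstable : k + lam.rowLen 1 ≤ n) :
    KroneckerTableau k (rowDiagram n) lam ≃ CorrSeq k (truncate lam) where
  toFun := toCorrSeq
  invFun := CorrSeq.toKroneckerTableau hcard hstable
  left_inv K := by
    ext1
    · exact funext fun i => pad_truncate ((K.card_seq i).trans (card_rowDiagram n))
    · funext i
      simp only [CorrSeq.toKroneckerTableau, toCorrSeq, Option.map_map]
      cases h : K.dist i with
      | none => rfl
      | some c =>
        obtain ⟨a, b, rfl⟩ := K.exists_eq_succ_of_dist_eq_some h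
        rfl
  right_inv S := by
    ext1
    · exact funext fun i => truncate_pad n (S.seq i)
    · funext i
      simp only [CorrSeq.toKroneckerTableau, toCorrSeq, Option.map_map]
      exact congrFun Option.map_id (S.dist i)

end KroneckerTableau

/-- Lemma 3.1: for `n ≥ k + λ₂` there is a bijection between Kronecker tableaux of length
`k`, initial shape `(n)` and final shape `λ`, and the sequences of diagrams from `∅` to
`λ̄` described above; in particular the two sets have the same cardinality. -/
theorem statement0 (n k : ℕ) (hn : 1 ≤ n) (hk : 1 ≤ k) (lam : YoungDiagram)
    (hcard : lam.card = n) (hstable : k + lam.rowLen 1 ≤ n) :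
    Nonempty (KroneckerTableau k (rowDiagram n) lam ≃ CorrSeq k (truncate lam)) ∧
    Nat.card (KroneckerTableau k (rowDiagram n) lam) = Nat.card (CorrSeq k (truncate lam)) := by
  have e := KroneckerTableau.equivCorrSeq hcard hstable
  exact ⟨⟨e⟩, Nat.card_congr e⟩

end KroneckerPaper
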